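/- arXiv:2311.07181 — 2 statements merged into one kernel-verified Lean document; each statement's English description precedes it below -/
import Mathlib

section
/- For nonnegative integers n, m with (n,m) ≠ (0,0), the number of noncrossing partitions of [n] into m blocks with no singleton block equals (1/(n−m+1))·C(n,m)·C(n−m−1,m−1). -/
/-- `π` is a partition of `[n] = {1,…,n}`: blocks are nonempty, pairwise disjoint,
and their union is exactly `{1,…,n}`. -/
def IsPartitionOf (n : ℕ) (π : Finset (Finset ℕ)) : Prop :=
  (∀ A ∈ π, A.Nonempty) ∧
  (∀ A ∈ π, ∀ B ∈ π, A ≠ B → Disjoint A B) ∧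
  (∀ x : ℕ, x ∈ Finset.Icc 1 n ↔ ∃ A ∈ π, x ∈ A)

/-- `π` is crossing: two distinct blocks contain `a < c < b < d` with `a,b` in one and
`c,d` in the other. -/
def Crossing (π : Finset (Finset ℕ)) : Prop :=
  ∃ A ∈ π, ∃ B ∈ π, A ≠ B ∧ ∃ a ∈ A, ∃ b ∈ A, ∃ c ∈ B, ∃ d ∈ B,
    a < c ∧ c < b ∧ b < d

/-- Noncrossing partition of `[n]`. -/
def IsNCPartition (n : ℕ) (π : Finset (Finset ℕ)) : Prop :=
  IsPartitionOf n π ∧ ¬ Crossing π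

/-- Replace the singleton blocks `{i}` and `{j}` by the block `{i,j}`. -/
def mergeSingles (π : Finset (Finset ℕ)) (i j : ℕ) : Finset (Finset ℕ) :=
  insert {i, j} ((π.erase {i}).erase {j})

/-- A marriageable singles partition of `[n]`. -/
def IsMarriageable (n : ℕ) (π : Finset (Finset ℕ)) : Prop :=
  IsNCPartition n π ∧ ∃ i j : ℕ, i ≠ j ∧ {i} ∈ π ∧ {j} ∈ π ∧
    IsNCPartition n (mergeSingles π i j)

/-- A lonely singles partition of `[n]`. -/
def IsLonely (n : ℕ) (π : Finset (Finset ℕ)) : Prop :=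
  IsNCPartition n π ∧ ¬ IsMarriageable n π

/-- `C n`: the number of noncrossing partitions of `[n]`. -/
noncomputable def Cnum (n : ℕ) : ℕ := Set.ncard {π : Finset (Finset ℕ) | IsNCPartition n π}

/-- `M n`: the number of marriageable singles partitions of `[n]`. -/
noncomputable def Mnum (n : ℕ) : ℕ := Set.ncard {π : Finset (Finset ℕ) | IsMarriageable n π}

/-- `L n`: the number of lonely singles partitions of `[n]`. -/
noncomputable def Lnum (n : ℕ) : ℕ := Set.ncard {π : Finset (Finset ℕ) | IsLonely n π}

/-- `NCcount n m k`: number of noncrossing partitions of `[n]` into `m` blocks with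
exactly `k` singleton blocks. -/
noncomputable def NCcount (n m k : ℕ) : ℕ :=
  Set.ncard {π : Finset (Finset ℕ) | IsNCPartition n π ∧ π.card = m ∧
    (π.filter fun A => A.card = 1).card = k}

/-- Binomial coefficient on integers, `0` when an argument is negative. -/
def zchoose (a b : ℤ) : ℤ := if 0 ≤ a ∧ 0 ≤ b then (a.toNat).choose b.toNat else 0

/-!
A noncrossing partition of `{0, …, n}` is built by adding the points `1, 2, …` one at a time while
keeping track only of the block of `0`: the new point first joins that block, and then possibly a
final segment of the block is cut off to form a block of its own. If a block of size `r` has weight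
`[X ^ r] φ`, the block of `0` excepted, and `φ` has constant term `1`, the total weight `w n H`
of the partitions in which the block of `0` has `H` points therefore satisfies
`w (n + 1) (h + 1) = ∑ r, [X ^ r] φ * w n (h + r)`, and induction gives the cycle-lemma formula
`(n + 1) * w n H = H * [X ^ (n + 1 - H)] φ ^ (n + 1)`. The case `H = 1` concerns the noncrossing
partitions of `[n]`. With `φ = 1 + t * v`, the coefficient of `t ^ m` refines it to partitions into
`m` blocks, of total weight `C(n + 1, m) / (n + 1) * [X ^ n] v ^ m`. Singletons are excluded by
`v = X ^ 2 + X ^ 3 + ⋯`, where `[X ^ n] v ^ m = C(n - m - 1, m - 1)`.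
-/

open Finset PowerSeries

/-! ### Marked noncrossing partitions -/

/-- `(U, σ)` is a marked noncrossing partition of `[n]`: the blocks of `σ` together with the set `U`
of marked points partition `[n]`, no two blocks cross, and no marked point is nested under a block.
Equivalently, `U` is what remains of the block of `0` in a noncrossing partition of `{0, …, n}`. -/
structure IsMarkedNC (n : ℕ) (U : Finset ℕ) (σ : Finset (Finset ℕ)) : Prop where
  nonempty : ∀ A ∈ σ, A.Nonempty
  disjoint : ∀ A ∈ σ, ∀ B ∈ σ, A ≠ B → Disjoint A B
  disjoint_marked : ∀ A ∈ σ, Disjoint U A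
  mem_Icc_iff : ∀ x, x ∈ Icc 1 n ↔ x ∈ U ∨ ∃ A ∈ σ, x ∈ A
  not_crossing : ¬Crossing σ
  not_nested : ∀ A ∈ σ, ∀ a ∈ A, ∀ b ∈ A, ∀ u ∈ U, a < u → ¬u < b

theorem isMarkedNC_empty_iff {n : ℕ} {σ : Finset (Finset ℕ)} :
    IsMarkedNC n ∅ σ ↔ IsNCPartition n σ := by
  refine ⟨fun h ↦ ⟨⟨h.nonempty, h.disjoint, by simpa using h.mem_Icc_iff⟩, h.not_crossing⟩, ?_⟩
  rintro ⟨⟨hne, hdisj, hmem⟩, hcross⟩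
  exact ⟨hne, hdisj, by simp, by simpa using hmem, hcross, by simp⟩

theorem Crossing.mono {σ τ : Finset (Finset ℕ)} (hστ : σ ⊆ τ) : Crossing σ → Crossing τ := by
  rintro ⟨A, hA, B, hB, h⟩
  exact ⟨A, hστ hA, B, hστ hB, h⟩

namespace IsMarkedNC

variable {n : ℕ} {U V A : Finset ℕ} {σ τ : Finset (Finset ℕ)}

theorem subset_Icc (h : IsMarkedNC n U σ) : U ⊆ Icc 1 n :=
  fun x hx ↦ (h.mem_Icc_iff x).2 (.inl hx)

theorem block_subset_Icc (h : IsMarkedNC n U σ) (hA : A ∈ σ) : A ⊆ Icc 1 n :=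
  fun x hx ↦ (h.mem_Icc_iff x).2 (.inr ⟨A, hA, hx⟩)

theorem card_le (h : IsMarkedNC n U σ) : #U ≤ n := by
  simpa using card_le_card h.subset_Icc

theorem eq_of_mem (h : IsMarkedNC n U σ) {B : Finset ℕ} (hA : A ∈ σ) (hB : B ∈ σ) {x : ℕ}
    (hxA : x ∈ A) (hxB : x ∈ B) : A = B :=
  by_contra fun hne ↦ disjoint_left.1 (h.disjoint A hA B hB hne) hxA hxB

theorem succ_notMem (h : IsMarkedNC n U σ) : n + 1 ∉ U := fun hU ↦ by
  simpa using h.subset_Icc hU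

theorem insert_succ (h : IsMarkedNC n U σ) : IsMarkedNC (n + 1) (insert (n + 1) U) σ where
  nonempty := h.nonempty
  disjoint := h.disjoint
  disjoint_marked A hA := by
    refine disjoint_insert_left.2 ⟨fun hn ↦ ?_, h.disjoint_marked A hA⟩
    simpa using h.block_subset_Icc hA hn
  mem_Icc_iff x := by
    rw [← insert_Icc_right_eq_Icc_add_one (by lia), mem_insert, mem_insert, h.mem_Icc_iff x,
      or_assoc]
  not_crossing := h.not_crossing
  not_nested A hA a ha b hb u hu hau hub := by
    obtain rfl | hu := mem_insert.1 hu
    · have := mem_Icc.1 (h.block_subset_Icc hA hb)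
      lia
    · exact h.not_nested A hA a ha b hb u hu hau hub

theorem erase_succ (h : IsMarkedNC (n + 1) V σ) (hn : n + 1 ∈ V) :
    IsMarkedNC n (V.erase (n + 1)) σ where
  nonempty := h.nonempty
  disjoint := h.disjoint
  disjoint_marked A hA := (h.disjoint_marked A hA).mono_left (erase_subset _ _)
  mem_Icc_iff x := by
    have hx : x ∈ Icc 1 n ↔ x ≠ n + 1 ∧ x ∈ Icc 1 (n + 1) := by
      simp only [mem_Icc]
      lia
    have hblock : ∀ A ∈ σ, n + 1 ∉ A := fun A hA ↦ disjoint_left.1 (h.disjoint_marked A hA) hn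
    rw [hx, h.mem_Icc_iff x, mem_erase]
    grind
  not_crossing := h.not_crossing
  not_nested A hA a ha b hb u hu := h.not_nested A hA a ha b hb u (mem_of_mem_erase hu)

theorem cut (h : IsMarkedNC n V τ) {c : ℕ} (hc : c ∈ V) :
    IsMarkedNC n {x ∈ V | x < c} (insert {x ∈ V | c ≤ x} τ) where
  nonempty := forall_mem_insert _ _ _ |>.2 ⟨⟨c, by simpa using hc⟩, h.nonempty⟩
  disjoint A hA B hB hne := by
    have hdisj := fun D hD ↦ (h.disjoint_marked D hD).mono_left (filter_subset (c ≤ ·) V)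
    obtain rfl | hA := mem_insert.1 hA <;> obtain rfl | hB := mem_insert.1 hB
    · exact absurd rfl hne
    · exact hdisj B hB
    · exact (hdisj A hA).symm
    · exact h.disjoint A hA B hB hne
  disjoint_marked := by
    refine forall_mem_insert _ _ _ |>.2 ⟨?_, fun A hA ↦ ?_⟩
    · exact disjoint_filter.2 fun x _ hlt hle ↦ hlt.not_ge hle
    · exact (h.disjoint_marked A hA).mono_left (filter_subset _ _)
  mem_Icc_iff x := by
    have hsplit : x ∈ V ↔ x ∈ ({x ∈ V | x < c} : Finset ℕ) ∨ x ∈ ({x ∈ V | c ≤ x} : Finset ℕ) := by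
      simp only [mem_filter, ← and_or_left, lt_or_ge, and_true]
    rw [h.mem_Icc_iff x, exists_mem_insert, hsplit, or_assoc]
  not_crossing := by
    rintro ⟨A, hA, B, hB, hne, a, ha, b, hb, u, hu, v, hv, hau, hub, hbv⟩
    obtain rfl | hA := mem_insert.1 hA <;> obtain rfl | hB := mem_insert.1 hB
    · exact hne rfl
    · exact h.not_nested B hB u hu v hv b (mem_of_mem_filter b hb) hub hbv
    · exact h.not_nested A hA a ha b hb u (mem_of_mem_filter u hu) hau hub
    · exact h.not_crossing ⟨A, hA, B, hB, hne, a, ha, b, hb, u, hu, v, hv, hau, hub, hbv⟩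
  not_nested := by
    refine forall_mem_insert _ _ _ |>.2 ⟨fun a ha _ _ u hu hau ↦ ?_, fun A hA a ha b hb u hu ↦ ?_⟩
    · have := (mem_filter.1 ha).2
      have := (mem_filter.1 hu).2
      lia
    · exact h.not_nested A hA a ha b hb u (mem_of_mem_filter u hu)

theorem merge_last (h : IsMarkedNC n U σ) (hA : A ∈ σ) (hn : n ∈ A) :
    IsMarkedNC n (U ∪ A) (σ.erase A) where
  nonempty B hB := h.nonempty B (mem_of_mem_erase hB)
  disjoint B hB C hC := h.disjoint B (mem_of_mem_erase hB) C (mem_of_mem_erase hC)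
  disjoint_marked B hB := by
    obtain ⟨hne, hB⟩ := mem_erase.1 hB
    exact disjoint_union_left.2 ⟨h.disjoint_marked B hB, h.disjoint A hA B hB hne.symm⟩
  mem_Icc_iff x := by
    have hx := h.mem_Icc_iff x
    grind
  not_crossing hcross := h.not_crossing (hcross.mono (erase_subset A σ))
  not_nested B hB a ha b hb u hu hau hub := by
    obtain ⟨hne, hB⟩ := mem_erase.1 hB
    obtain hu | hu := mem_union.1 hu
    · exact h.not_nested B hB a ha b hb u hu hau hub
    have hbn : b < n := by
      refine lt_of_le_of_ne (mem_Icc.1 (h.block_subset_Icc hB hb)).2 ?_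
      rintro rfl
      exact hne (h.eq_of_mem hB hA hb hn)
    exact h.not_crossing ⟨B, hB, A, hA, hne, a, ha, b, hb, u, hu, n, hn, hau, hub, hbn⟩

theorem marked_lt_block (h : IsMarkedNC n U σ) (hA : A ∈ σ) (hn : n ∈ A) {u a : ℕ} (hu : u ∈ U)
    (ha : a ∈ A) : u < a := by
  have hne : ∀ b ∈ A, u ≠ b := fun b hb hub ↦
    disjoint_left.1 (h.disjoint_marked A hA) hu (hub ▸ hb)
  have hun : u < n := lt_of_le_of_ne (mem_Icc.1 (h.subset_Icc hu)).2 (hne n hn)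
  refine lt_of_le_of_ne (not_lt.1 fun hau ↦ ?_) (hne a ha)
  exact h.not_nested A hA a ha n hn u hu hau hun

end IsMarkedNC

open Classical in
/-- The pairs `(U, σ)` that form a marked noncrossing partition of `[n]`. -/
noncomputable def markedNC (n : ℕ) : Finset (Finset ℕ × Finset (Finset ℕ)) :=
  {p ∈ (Icc 1 n).powerset ×ˢ (Icc 1 n).powerset.powerset | IsMarkedNC n p.1 p.2}

theorem mem_markedNC {n : ℕ} {p : Finset ℕ × Finset (Finset ℕ)} :
    p ∈ markedNC n ↔ IsMarkedNC n p.1 p.2 := by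
  simp only [markedNC, mem_filter, mem_product, mem_powerset, and_iff_right_iff_imp]
  exact fun h ↦ ⟨h.subset_Icc, fun A hA ↦ mem_powerset.2 (h.block_subset_Icc hA)⟩

theorem markedNC_zero : markedNC 0 = {(∅, ∅)} := by
  ext ⟨U, σ⟩
  rw [mem_markedNC, mem_singleton, Prod.mk.injEq]
  constructor
  · intro h
    refine ⟨subset_empty.1 h.subset_Icc, eq_empty_of_forall_notMem fun A hA ↦ ?_⟩
    exact (h.nonempty A hA).ne_empty (subset_empty.1 (h.block_subset_Icc hA))
  · rintro ⟨rfl, rfl⟩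
    exact ⟨by simp, by simp, by simp, by simp, by simp [Crossing], by simp⟩

/-- Turns the points of `V` from `c` on into a block, keeping the points before `c` marked. When `V`
contains the last point, these are the ways to close a block there. -/
def cutAt (V : Finset ℕ) (τ : Finset (Finset ℕ)) (c : ℕ) : Finset ℕ × Finset (Finset ℕ) :=
  ({x ∈ V | x < c}, insert {x ∈ V | c ≤ x} τ)

theorem IsMarkedNC.cutAt_injective {n : ℕ} {V V' : Finset ℕ} {τ τ' : Finset (Finset ℕ)} {c c' : ℕ}
    (h : IsMarkedNC n V τ) (h' : IsMarkedNC n V' τ') (hn : n ∈ V) (hn' : n ∈ V') (hc : c ∈ V)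
    (hc' : c' ∈ V') (heq : cutAt V τ c = cutAt V' τ' c') : V = V' ∧ τ = τ' ∧ c = c' := by
  obtain ⟨hlt, hblocks⟩ := Prod.mk.inj heq
  have last_mem : ∀ {V τ c}, IsMarkedNC n V τ → n ∈ V → c ∈ V →
      n ∈ ({x ∈ V | c ≤ x} : Finset ℕ) := fun h hn hc ↦
    mem_filter.2 ⟨hn, (mem_Icc.1 (h.subset_Icc hc)).2⟩
  have block_notMem : ∀ {V τ c}, IsMarkedNC n V τ → n ∈ V → c ∈ V →
      ({x ∈ V | c ≤ x} : Finset ℕ) ∉ τ := fun h hn hc hmem ↦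
    disjoint_left.1 (h.disjoint_marked _ hmem) hn (last_mem h hn hc)
  have hge : ({x ∈ V | c ≤ x} : Finset ℕ) = {x ∈ V' | c' ≤ x} :=
    (h'.cut hc').eq_of_mem (hblocks ▸ mem_insert_self _ _) (mem_insert_self _ _)
      (last_mem h hn hc) (last_mem h' hn' hc')
  refine ⟨?_, ?_, ?_⟩
  · rw [← filter_union_filter_not_eq (· < c) V, ← filter_union_filter_not_eq (· < c') V']
    simp only [not_lt, hlt, hge]
  · rw [← erase_insert (block_notMem h hn hc), ← erase_insert (block_notMem h' hn' hc'), hblocks,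
      hge]
  · have hcV' : c ∈ ({x ∈ V' | c' ≤ x} : Finset ℕ) := hge ▸ mem_filter.2 ⟨hc, le_rfl⟩
    have hcV : c' ∈ ({x ∈ V | c ≤ x} : Finset ℕ) := hge ▸ mem_filter.2 ⟨hc', le_rfl⟩
    exact le_antisymm (mem_filter.1 hcV).2 (mem_filter.1 hcV').2

theorem IsMarkedNC.exists_cutAt_eq {n : ℕ} {U : Finset ℕ} {σ : Finset (Finset ℕ)}
    (h : IsMarkedNC n U σ) (hn : 1 ≤ n) (hU : n ∉ U) :
    ∃ V τ c, IsMarkedNC n V τ ∧ n ∈ V ∧ c ∈ V ∧ cutAt V τ c = (U, σ) := by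
  obtain ⟨A, hA, hnA⟩ := ((h.mem_Icc_iff n).1 (mem_Icc.2 ⟨hn, le_rfl⟩)).resolve_left hU
  set c := A.min' ⟨n, hnA⟩
  have hcA : c ∈ A := min'_mem _ _
  have hle : ∀ a ∈ A, c ≤ a := fun a ha ↦ min'_le _ _ ha
  have hlt : ∀ u ∈ U, u < c := fun u hu ↦ h.marked_lt_block hA hnA hu hcA
  refine ⟨U ∪ A, σ.erase A, c, h.merge_last hA hnA, mem_union_right _ hnA, mem_union_right _ hcA,
    ?_⟩
  have hUA : ({x ∈ U ∪ A | x < c} : Finset ℕ) = U := by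
    rw [filter_union, filter_true_of_mem hlt, filter_false_of_mem fun a ha ↦ (hle a ha).not_gt,
      union_empty]
  have hAU : ({x ∈ U ∪ A | c ≤ x} : Finset ℕ) = A := by
    rw [filter_union, filter_false_of_mem fun u hu ↦ (hlt u hu).not_ge, filter_true_of_mem hle,
      empty_union]
  rw [cutAt, hUA, hAU, insert_erase hA]

section Sums

variable {M : Type*} [AddCommMonoid M]

theorem sum_markedNC_succ_of_mem (n : ℕ) (f : Finset ℕ × Finset (Finset ℕ) → M) :
    ∑ p ∈ markedNC (n + 1) with n + 1 ∈ p.1, f p =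
      ∑ p ∈ markedNC n, f (insert (n + 1) p.1, p.2) := by
  refine sum_bij' (fun p _ ↦ (p.1.erase (n + 1), p.2)) (fun p _ ↦ (insert (n + 1) p.1, p.2))
    ?_ ?_ ?_ ?_ ?_ <;> simp only [mem_filter, mem_markedNC]
  · exact fun p hp ↦ hp.1.erase_succ hp.2
  · exact fun p hp ↦ ⟨hp.insert_succ, mem_insert_self _ _⟩
  · exact fun p hp ↦ by rw [insert_erase hp.2]
  · exact fun p hp ↦ by rw [erase_insert hp.succ_notMem]
  · exact fun p hp ↦ by rw [insert_erase hp.2]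

theorem sum_markedNC_of_notMem {n : ℕ} (hn : 1 ≤ n) (f : Finset ℕ × Finset (Finset ℕ) → M) :
    ∑ p ∈ markedNC n with n ∉ p.1, f p =
      ∑ p ∈ markedNC n with n ∈ p.1, ∑ c ∈ p.1, f (cutAt p.1 p.2 c) := by
  rw [sum_sigma']
  symm
  refine sum_bij (fun x _ ↦ cutAt x.1.1 x.1.2 x.2) ?_ ?_ ?_ fun _ _ ↦ rfl <;>
    simp only [mem_sigma, mem_filter, mem_markedNC]
  · rintro ⟨⟨V, τ⟩, c⟩ ⟨⟨h, -⟩, hc⟩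
    have hcn : c ≤ n := (mem_Icc.1 (h.subset_Icc hc)).2
    exact ⟨h.cut hc, fun hn ↦ (mem_filter.1 hn).2.not_ge hcn⟩
  · rintro ⟨⟨V, τ⟩, c⟩ ⟨⟨h, hn⟩, hc⟩ ⟨⟨V', τ'⟩, c'⟩ ⟨⟨h', hn'⟩, hc'⟩ heq
    obtain ⟨rfl, rfl, rfl⟩ := h.cutAt_injective h' hn hn' hc hc' heq
    rfl
  · rintro ⟨U, σ⟩ ⟨h, hU⟩
    obtain ⟨V, τ, c, hV, hnV, hcV, heq⟩ := h.exists_cutAt_eq hn hU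
    exact ⟨⟨(V, τ), c⟩, ⟨⟨hV, hnV⟩, hcV⟩, heq⟩

theorem sum_markedNC_succ (n : ℕ) (f : Finset ℕ × Finset (Finset ℕ) → M) :
    ∑ p ∈ markedNC (n + 1), f p = ∑ p ∈ markedNC n, (f (insert (n + 1) p.1, p.2) +
      ∑ c ∈ insert (n + 1) p.1, f (cutAt (insert (n + 1) p.1) p.2 c)) := by
  rw [sum_add_distrib, ← sum_markedNC_succ_of_mem n f,
    ← sum_markedNC_succ_of_mem n fun p ↦ ∑ c ∈ p.1, f (cutAt p.1 p.2 c),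
    ← sum_markedNC_of_notMem (by lia) f, sum_filter_add_sum_filter_not]

theorem sum_card_filter_lt {α : Type*} [LinearOrder α] (s : Finset α) (g : ℕ → M) :
    ∑ c ∈ s, g #{x ∈ s | x < c} = ∑ i ∈ range #s, g i := by
  induction s using Finset.induction_on_max with
  | empty => simp
  | insert a s ha ih =>
    have has : a ∉ s := fun h ↦ (ha a h).false
    have hmax : ({x ∈ insert a s | x < a} : Finset α) = s := by
      rw [filter_insert, if_neg (lt_irrefl a), filter_true_of_mem ha]
    have hrest : ∀ c ∈ s, ({x ∈ insert a s | x < c} : Finset α) = {x ∈ s | x < c} := fun c hc ↦ by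
      rw [filter_insert, if_neg (ha c hc).not_gt]
    rw [sum_insert has, hmax, sum_congr rfl fun c hc ↦ by rw [hrest c hc], ih,
      card_insert_of_notMem has, sum_range_succ, add_comm]

end Sums

/-! ### The weight enumerator of noncrossing partitions -/

section GeneratingFunction

variable {R : Type*} [CommRing R]

theorem coeff_X_mul_derivative (φ : R⟦X⟧) (s : ℕ) :
    coeff s (X * derivative R φ) = s * coeff s φ := by
  cases s with
  | zero => simp
  | succ s => rw [coeff_succ_X_mul, coeff_derivative, Nat.cast_add_one, mul_comm]

theorem succ_mul_sum_antidiagonal_coeff_mul_coeff_pow (φ : R⟦X⟧) (k h s : ℕ) :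
    ((k : R) + 1) * ∑ x ∈ antidiagonal s, coeff x.1 φ * ((h + x.1) * coeff x.2 (φ ^ k)) =
      (h * (k + 1) + s) * coeff s (φ ^ (k + 1)) := by
  have hconv : ∑ x ∈ antidiagonal s, coeff x.1 φ * coeff x.2 (φ ^ k) = coeff s (φ ^ (k + 1)) := by
    rw [pow_succ', coeff_mul]
  -- Both sides are the coefficient of `X ^ s` in `X` times the derivative of `φ ^ (k + 1)`.
  have hderiv : ((k : R) + 1) * ∑ x ∈ antidiagonal s, x.1 * coeff x.1 φ * coeff x.2 (φ ^ k) =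
      s * coeff s (φ ^ (k + 1)) := by
    have hpow : X * derivative R (φ ^ (k + 1)) =
        C ((k : R) + 1) * (X * derivative R φ * φ ^ k) := by
      rw [derivative_pow]
      simp only [add_tsub_cancel_right, Nat.cast_add, Nat.cast_one, map_add, map_natCast, map_one]
      ring
    rw [← coeff_X_mul_derivative, hpow, coeff_C_mul, coeff_mul]
    simp only [coeff_X_mul_derivative]
  have hsplit : ∑ x ∈ antidiagonal s, coeff x.1 φ * ((h + x.1) * coeff x.2 (φ ^ k)) =
      h * ∑ x ∈ antidiagonal s, coeff x.1 φ * coeff x.2 (φ ^ k) +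
        ∑ x ∈ antidiagonal s, x.1 * coeff x.1 φ * coeff x.2 (φ ^ k) := by
    rw [mul_sum, ← sum_add_distrib]
    exact sum_congr rfl fun x _ ↦ by ring
  rw [hsplit, hconv, mul_add, hderiv]
  ring

theorem sum_antidiagonal_ite_eq_add {M : Type*} [AddCommMonoid M] {h k s : ℕ} (hk : k ≤ h + s)
    (g : ℕ → M) :
    (∑ x ∈ antidiagonal s, if k = h + x.1 then g x.1 else 0) = if h ≤ k then g (k - h) else 0 := by
  rw [Nat.sum_antidiagonal_eq_sum_range_succ_mk]
  split_ifs with hhk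
  · rw [sum_eq_single (k - h), if_pos (by lia)]
    · exact fun i _ hi ↦ if_neg (by lia)
    · exact fun hnot ↦ absurd (mem_range.2 (by lia)) hnot
  · exact sum_eq_zero fun i _ ↦ if_neg (by lia)

/-- The weight of a family of blocks in which a block of size `r` has weight `[X ^ r] φ`. -/
noncomputable def blockWeight (φ : R⟦X⟧) (σ : Finset (Finset ℕ)) : R :=
  ∏ A ∈ σ, coeff #A φ

theorem sum_blockWeight_cutAt {n : ℕ} {V : Finset ℕ} {τ : Finset (Finset ℕ)}
    (hV : IsMarkedNC n V τ) (φ : R⟦X⟧) (h : ℕ) :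
    (∑ c ∈ V, if #(cutAt V τ c).1 = h then blockWeight φ (cutAt V τ c).2 else 0) =
      if h < #V then coeff (#V - h) φ * blockWeight φ τ else 0 := by
  have hterm : ∀ c ∈ V, (if #(cutAt V τ c).1 = h then blockWeight φ (cutAt V τ c).2 else 0) =
      if #{x ∈ V | x < c} = h then coeff (#V - h) φ * blockWeight φ τ else 0 := by
    refine fun c hc ↦ if_ctx_congr Iff.rfl (fun hcard ↦ ?_) fun _ ↦ rfl
    have hc_mem : c ∈ ({x ∈ V | c ≤ x} : Finset ℕ) := mem_filter.2 ⟨hc, le_rfl⟩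
    have hnot : ({x ∈ V | c ≤ x} : Finset ℕ) ∉ τ := fun hmem ↦
      disjoint_left.1 (hV.disjoint_marked _ hmem) hc hc_mem
    have hblock : #{x ∈ V | c ≤ x} = #V - h := by
      have := card_filter_add_card_filter_not (s := V) (· < c)
      simp only [not_lt] at this
      lia
    rw [cutAt, blockWeight, prod_insert hnot, hblock, blockWeight]
  rw [sum_congr rfl hterm, sum_card_filter_lt V
    fun i ↦ if i = h then coeff (#V - h) φ * blockWeight φ τ else 0, sum_ite_eq']
  simp only [mem_range]

/-- The total weight of the marked noncrossing partitions of `[n]` with `H - 1` marked points. The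
shift by one counts the block of `0` with all its points. -/
noncomputable def markedWeight (φ : R⟦X⟧) (n H : ℕ) : R :=
  ∑ p ∈ markedNC n with #p.1 + 1 = H, blockWeight φ p.2

theorem markedWeight_zero_right (φ : R⟦X⟧) (n : ℕ) : markedWeight φ n 0 = 0 := by
  simp [markedWeight]

theorem markedWeight_succ_succ {φ : R⟦X⟧} (hφ : constantCoeff φ = 1) {n h s : ℕ}
    (hs : h + s = n + 1) :
    markedWeight φ (n + 1) (h + 1) =
      ∑ x ∈ antidiagonal s, coeff x.1 φ * markedWeight φ n (h + x.1) := by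
  have hchildren : ∀ p ∈ markedNC n,
      (if #(insert (n + 1) p.1) = h then blockWeight φ p.2 else 0) +
        (∑ c ∈ insert (n + 1) p.1, if #(cutAt (insert (n + 1) p.1) p.2 c).1 = h then
          blockWeight φ (cutAt (insert (n + 1) p.1) p.2 c).2 else 0) =
      ∑ x ∈ antidiagonal s, if #p.1 + 1 = h + x.1 then coeff x.1 φ * blockWeight φ p.2 else 0 := by
    intro p hp
    rw [mem_markedNC] at hp
    have hle := hp.card_le
    rw [sum_blockWeight_cutAt hp.insert_succ, card_insert_of_notMem hp.succ_notMem,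
      sum_antidiagonal_ite_eq_add (by lia) fun r ↦ coeff r φ * blockWeight φ p.2]
    rcases lt_trichotomy h (#p.1 + 1) with hlt | rfl | hgt
    · rw [if_neg hlt.ne', if_pos hlt, if_pos hlt.le, zero_add]
    · simp [hφ]
    · rw [if_neg hgt.ne, if_neg hgt.not_gt, if_neg hgt.not_ge, add_zero]
  simp only [markedWeight, add_left_inj, sum_filter, mul_sum, mul_ite, mul_zero]
  rw [sum_markedNC_succ, sum_congr rfl hchildren, sum_comm]

theorem succ_mul_markedWeight [IsDomain R] [CharZero R] {φ : R⟦X⟧} (hφ : constantCoeff φ = 1)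
    (n : ℕ) {H s : ℕ} (hs : H + s = n + 1) :
    ((n : R) + 1) * markedWeight φ n H = H * coeff s (φ ^ (n + 1)) := by
  induction n generalizing H s with
  | zero =>
    obtain ⟨rfl, rfl⟩ | ⟨rfl, rfl⟩ : H = 0 ∧ s = 1 ∨ H = 1 ∧ s = 0 := by lia
    · simp [markedWeight_zero_right]
    · simp [markedWeight, markedNC_zero, blockWeight, hφ, filter_singleton]
  | succ n ih =>
    obtain _ | h := H
    · simp [markedWeight_zero_right]
    have hn : ((n : R) + 1) ≠ 0 := by exact_mod_cast n.succ_ne_zero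
    have hs' : (h : R) + s = n + 1 := by exact_mod_cast (by lia : h + s = n + 1)
    have hrec : ((n : R) + 1) * markedWeight φ (n + 1) (h + 1) =
        ∑ x ∈ antidiagonal s, coeff x.1 φ * ((h + x.1) * coeff x.2 (φ ^ (n + 1))) := by
      rw [markedWeight_succ_succ hφ (by lia : h + s = n + 1), mul_sum]
      refine sum_congr rfl fun x hx ↦ ?_
      have := mem_antidiagonal.1 hx
      rw [mul_left_comm, ih (by lia : h + x.1 + x.2 = n + 1), Nat.cast_add]
    have hconv := succ_mul_sum_antidiagonal_coeff_mul_coeff_pow φ (n + 1) h s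
    refine mul_left_cancel₀ hn ?_
    push_cast at hconv ⊢
    rw [mul_left_comm, hrec, hconv]
    linear_combination coeff s (φ ^ (n + 1 + 1)) * hs'

open Classical in
/-- The noncrossing partitions of `[n]`. -/
noncomputable def ncPartitions (n : ℕ) : Finset (Finset (Finset ℕ)) :=
  {σ ∈ (Icc 1 n).powerset.powerset | IsNCPartition n σ}

theorem mem_ncPartitions {n : ℕ} {σ : Finset (Finset ℕ)} :
    σ ∈ ncPartitions n ↔ IsNCPartition n σ := by
  simp only [ncPartitions, mem_filter, mem_powerset, and_iff_right_iff_imp]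
  exact fun h A hA ↦ mem_powerset.2 ((isMarkedNC_empty_iff.2 h).block_subset_Icc hA)

theorem markedWeight_one (φ : R⟦X⟧) (n : ℕ) :
    markedWeight φ n 1 = ∑ σ ∈ ncPartitions n, blockWeight φ σ := by
  have hmem : ∀ p, p ∈ ({p ∈ markedNC n | #p.1 + 1 = 1} : Finset _) ↔
      p.1 = ∅ ∧ p.2 ∈ ncPartitions n := by
    rintro ⟨U, σ⟩
    rw [mem_filter, mem_markedNC, mem_ncPartitions, Nat.add_eq_right, card_eq_zero, and_comm]
    refine and_congr_right ?_
    rintro rfl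
    exact isMarkedNC_empty_iff
  refine sum_nbij' Prod.snd (Prod.mk ∅) ?_ ?_ ?_ ?_ fun _ _ ↦ rfl <;> simp only [hmem]
  · exact fun p hp ↦ hp.2
  · exact fun σ hσ ↦ ⟨trivial, hσ⟩
  · exact fun p hp ↦ Prod.ext hp.1.symm rfl
  · exact fun _ _ ↦ trivial

theorem succ_mul_sum_blockWeight [IsDomain R] [CharZero R] {φ : R⟦X⟧}
    (hφ : constantCoeff φ = 1) (n : ℕ) :
    ((n : R) + 1) * ∑ σ ∈ ncPartitions n, blockWeight φ σ = coeff n (φ ^ (n + 1)) := by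
  rw [← markedWeight_one, succ_mul_markedWeight hφ n (add_comm 1 n), Nat.cast_one, one_mul]

theorem succ_mul_sum_blockWeight_of_card [IsDomain R] [CharZero R] {v : R⟦X⟧}
    (hv : constantCoeff v = 0) (n m : ℕ) :
    ((n : R) + 1) * ∑ σ ∈ ncPartitions n with #σ = m, blockWeight v σ =
      (n + 1).choose m * coeff n (v ^ m) := by
  -- Giving each block an extra weight `t` turns the number of blocks into the exponent of `t`.
  let φ : (Polynomial R)⟦X⟧ := 1 + C Polynomial.X * map Polynomial.C v
  have hφ : constantCoeff φ = 1 := by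
    rw [map_add, map_one, map_mul, ← coeff_zero_eq_constantCoeff_apply (map _ v), coeff_map,
      coeff_zero_eq_constantCoeff_apply, hv, map_zero, mul_zero, add_zero]
  have hweight : ∀ σ ∈ ncPartitions n,
      blockWeight φ σ = Polynomial.C (blockWeight v σ) * Polynomial.X ^ #σ := by
    intro σ hσ
    have hcoeff : ∀ A ∈ σ, coeff #A φ = Polynomial.C (coeff #A v) * Polynomial.X := fun A hA ↦ by
      have hne : #A ≠ 0 := card_ne_zero.2 ((mem_ncPartitions.1 hσ).1.1 A hA)
      rw [map_add, coeff_one, if_neg hne, zero_add, coeff_C_mul, coeff_map, mul_comm]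
    rw [blockWeight, prod_congr rfl hcoeff, prod_mul_distrib, prod_const, blockWeight, map_prod]
  have hpow : coeff n (φ ^ (n + 1)) = ∑ k ∈ range (n + 2),
      Polynomial.C (((n + 1).choose k : R) * coeff n (v ^ k)) * Polynomial.X ^ k := by
    simp only [φ, add_comm (1 : (Polynomial R)⟦X⟧), add_pow, one_pow, mul_one, mul_pow, map_sum]
    refine sum_congr rfl fun k _ ↦ ?_
    rw [← map_pow, ← map_pow, mul_assoc, coeff_C_mul, ← map_natCast (C (R := Polynomial R)),
      coeff_mul_C, coeff_map, map_mul, map_natCast]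
    ring
  have hcast : (n : Polynomial R) + 1 = Polynomial.C ((n : R) + 1) := by simp
  have h := congrArg (Polynomial.coeff · m) (succ_mul_sum_blockWeight hφ n)
  simp only [sum_congr rfl hweight, hpow, hcast, Polynomial.coeff_C_mul,
    Polynomial.finsetSum_coeff, Polynomial.coeff_X_pow, mul_ite, mul_one, mul_zero, sum_ite_eq,
    mem_range] at h
  simp only [sum_filter, eq_comm (b := m), h, ite_eq_left_iff, not_lt]
  intro hm
  rw [Nat.choose_eq_zero_of_lt hm, Nat.cast_zero, zero_mul]

end GeneratingFunction

/-! ### Partitions without singleton blocks -/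

/-- The series `X ^ 2 + X ^ 3 + ⋯`; as a block weight it selects the partitions without singleton
blocks. -/
noncomputable def singletonFreeSeries : ℤ⟦X⟧ :=
  X ^ 2 * PowerSeries.mk 1

theorem constantCoeff_singletonFreeSeries : constantCoeff singletonFreeSeries = 0 := by
  simp [singletonFreeSeries]

theorem coeff_singletonFreeSeries (r : ℕ) :
    coeff r singletonFreeSeries = if 2 ≤ r then 1 else 0 := by
  rw [singletonFreeSeries, coeff_X_pow_mul']
  simp only [coeff_mk, Pi.one_apply]

theorem coeff_singletonFreeSeries_pow {n m : ℕ} (h : (n, m) ≠ (0, 0)) :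
    coeff n (singletonFreeSeries ^ m) = zchoose ((n : ℤ) - m - 1) ((m : ℤ) - 1) := by
  obtain _ | d := m
  · have hn : n ≠ 0 := fun hn ↦ h (hn ▸ rfl)
    simp [zchoose, coeff_one, hn]
  rw [singletonFreeSeries, mul_pow, ← pow_mul, coeff_X_pow_mul',
    mk_one_pow_eq_mk_choose_add, coeff_mk, zchoose]
  split_ifs with hle hpos hpos
  · congr <;> lia
  · lia
  · rw [Nat.choose_eq_zero_of_lt (by lia), Nat.cast_zero]
  · rfl

theorem sum_blockWeight_singletonFreeSeries (n m : ℕ) :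
    ∑ σ ∈ ncPartitions n with #σ = m, blockWeight singletonFreeSeries σ = NCcount n m 0 := by
  have hset : {σ | IsNCPartition n σ ∧ #σ = m ∧ #{A ∈ σ | #A = 1} = 0} =
      (({σ ∈ ncPartitions n | #σ = m ∧ ∀ A ∈ σ, 2 ≤ #A} : Finset _) : Set _) := by
    ext σ
    simp only [coe_filter, Set.mem_ofPred_eq, mem_ncPartitions, card_eq_zero, filter_eq_empty_iff]
    refine and_congr_right fun hσ ↦ and_congr_right fun _ ↦ forall₂_congr fun A hA ↦ ?_
    have := (hσ.1.1 A hA).card_pos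
    lia
  simp only [NCcount, hset, Set.ncard_coe_finset, blockWeight, coeff_singletonFreeSeries,
    prod_boole, sum_boole, filter_filter]

theorem cast_choose_succ_mul (n m : ℕ) :
    ((n + 1).choose m : ℤ) * (n - m + 1) = (n + 1) * n.choose m := by
  obtain hm | hm := le_or_gt m (n + 1)
  · have h := congrArg (Nat.cast : ℕ → ℤ) (Nat.choose_mul_succ_eq n m)
    push_cast [hm] at h
    linear_combination -h
  · rw [Nat.choose_eq_zero_of_lt hm, Nat.choose_eq_zero_of_lt (by lia)]
    simp

theorem stmt11 (n m : ℕ) (h : (n, m) ≠ (0, 0)) :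
    (NCcount n m 0 : ℤ) * ((n : ℤ) - m + 1) =
      zchoose n m * zchoose ((n : ℤ) - m - 1) ((m : ℤ) - 1) := by
  have hkreweras : ((n : ℤ) + 1) * NCcount n m 0 =
      (n + 1).choose m * zchoose ((n : ℤ) - m - 1) ((m : ℤ) - 1) := by
    rw [← sum_blockWeight_singletonFreeSeries, ← coeff_singletonFreeSeries_pow h]
    exact succ_mul_sum_blockWeight_of_card constantCoeff_singletonFreeSeries n m
  have hchoose : zchoose n m = n.choose m := by simp [zchoose]
  rw [hchoose]
  refine mul_left_cancel₀ (by lia : (n : ℤ) + 1 ≠ 0) ?_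
  linear_combination ((n : ℤ) - m + 1) * hkreweras +
    zchoose ((n : ℤ) - m - 1) ((m : ℤ) - 1) * cast_choose_succ_mul n m
end

section
/- For nonnegative integers n, m with (n,m) ≠ (1,1), the number of noncrossing partitions of [n] into m blocks with exactly one singleton block equals C(n, m−1)·C(n−m−1, m−2). -/
/-!
Call a family of disjoint, mutually noncrossing blocks in a finite set `S` of naturals a partial
noncrossing partition if no uncovered point lies between two elements of a block. Weight a block of
size `s` by `w s`, with `w 0 = 1`, let `F = ∑ w s x ^ s`, and let `W S t` be the total weight of the
families covering `t` points. Adjoin a new least element `a` to `S`: the block of `a`, possibly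
empty, must consist of the smallest points left uncovered by the other blocks, so its size
determines it. Hence `W (S ∪ {a}) t = ∑ w s * W S (t - s)`, whose solution is the coefficient of
`x ^ t` in `(F - x F') F ^ #S`; the recurrence needs only `t ≤ #S + 1`, and at `t = #S + 1` this
coefficient vanishes, as does `W S t`. For `t = #S = n`, the identity `x (F ^ (n + 1))' =
(n + 1) x F' F ^ n` turns it into Kreweras's formula `(n + 1) W S n = [x ^ n] F ^ (n + 1)`.

Taking `F = 1 + u x + v (x ^ 2 + x ^ 3 + ⋯)` and comparing coefficients of `u ^ k v ^ (m - k)` gives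
`(n + 1) NC(n, m, k) = C(n + 1, k) C(n + 1 - k, m - k) C(n - m - 1, m - k - 1)`.
-/

namespace NoncrossingPartition

open Finset hiding mk map

section InitialSegment

variable {α : Type*} [LinearOrder α] {U A B : Finset α}

/-- `B` consists of the `#B` smallest elements of `U`. -/
structure IsInitialSegment (U B : Finset α) : Prop where
  subset : B ⊆ U
  mem_of_lt : ∀ x ∈ U, ∀ y ∈ B, x < y → x ∈ B

lemma exists_isInitialSegment_card_eq (U : Finset α) {k : ℕ} (hk : k ≤ #U) :
    ∃ B, IsInitialSegment U B ∧ #B = k := by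
  induction U using Finset.induction_on_max with
  | empty => exact ⟨∅, ⟨Subset.rfl, by simp⟩, (Nat.le_zero.1 hk).symm⟩
  | insert a U ha ih =>
    rcases hk.eq_or_lt with rfl | hk
    · exact ⟨insert a U, ⟨Subset.rfl, fun x hx _ _ _ => hx⟩, rfl⟩
    · rw [card_insert_of_notMem fun h => (ha a h).false, Nat.lt_succ_iff] at hk
      obtain ⟨B, hB, rfl⟩ := ih hk
      refine ⟨B, ⟨hB.subset.trans (subset_insert a U), fun x hx y hy hxy => ?_⟩, rfl⟩
      rcases mem_insert.1 hx with rfl | hx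
      · exact absurd (ha y (hB.subset hy)) hxy.not_gt
      · exact hB.mem_of_lt x hx y hy hxy

lemma IsInitialSegment.eq_of_card_eq (hA : IsInitialSegment U A) (hB : IsInitialSegment U B)
    (hcard : #A = #B) : A = B := by
  by_cases h : A ⊆ B
  · exact eq_of_subset_of_card_le h hcard.ge
  · obtain ⟨a, ha, haB⟩ := not_subset.1 h
    have hBA : B ⊆ A := fun b hb => by
      rcases lt_trichotomy a b with hab | rfl | hba
      · exact absurd (hB.mem_of_lt a (hA.subset ha) b hb hab) haB
      · exact ha
      · exact hA.mem_of_lt b (hB.subset hb) a ha hba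
    exact (eq_of_subset_of_card_le hBA hcard.le).symm

end InitialSegment

/-- A partial noncrossing partition of `S`: a noncrossing family of disjoint blocks in `S`, not
necessarily covering `S`, such that no uncovered element of `S` lies between two elements of a
block. Adding a block that contains a new least element then never creates a crossing, as long as
the block takes its other elements from the uncovered ones, smallest first. -/
structure IsPartialNC (S : Finset ℕ) (π : Finset (Finset ℕ)) : Prop where
  nonempty : ∀ A ∈ π, A.Nonempty
  subset : ∀ A ∈ π, A ⊆ S
  disjoint : ∀ A ∈ π, ∀ B ∈ π, A ≠ B → Disjoint A B
  not_crossing : ¬ Crossing π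
  covered : ∀ A ∈ π, ∀ x ∈ A, ∀ y ∈ A, ∀ z ∈ S, x < z → z < y → z ∈ π.sup id

/-- The block of `π` containing `a`, or `∅` if `a` is not covered. -/
def blockAt (a : ℕ) (π : Finset (Finset ℕ)) : Finset ℕ := {A ∈ π | a ∈ A}.sup id

/-- The family `π` without the block containing `a`. -/
def peel (a : ℕ) (π : Finset (Finset ℕ)) : Finset (Finset ℕ) := {A ∈ π | a ∉ A}

/-- The family `π` with the block `B` added, or `π` itself if `B = ∅`: erasing `∅` makes `addBlock`
inverse to the pair `blockAt a`, `peel a` also on families that do not cover `a`. -/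
def addBlock (B : Finset ℕ) (π : Finset (Finset ℕ)) : Finset (Finset ℕ) := (insert B π).erase ∅

section Peel

variable {S A B : Finset ℕ} {π : Finset (Finset ℕ)} {a : ℕ}

lemma mem_peel : A ∈ peel a π ↔ A ∈ π ∧ a ∉ A := mem_filter

lemma peel_subset : peel a π ⊆ π := filter_subset _ π

lemma mem_addBlock : A ∈ addBlock B π ↔ A ≠ ∅ ∧ (A = B ∨ A ∈ π) := by
  rw [addBlock, mem_erase, mem_insert]

lemma sup_addBlock : (addBlock B π).sup id = B ∪ π.sup id := by
  rw [addBlock, ← bot_eq_empty, sup_erase_bot, sup_insert, id, sup_eq_union]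

lemma blockAt_union_sup_peel : blockAt a π ∪ (peel a π).sup id = π.sup id := by
  rw [blockAt, peel, ← sup_eq_union, ← sup_union, filter_union_filter_not_eq]

lemma subset_sup (hA : A ∈ π) : A ⊆ π.sup id := le_sup (f := id) hA

lemma not_crossing_mono {π' : Finset (Finset ℕ)} (hπ : ¬ Crossing π) (hsub : π' ⊆ π) :
    ¬ Crossing π' := fun ⟨A, hA, B, hB, hAB⟩ => hπ ⟨A, hsub hA, B, hsub hB, hAB⟩

namespace IsPartialNC

lemma empty_notMem (hπ : IsPartialNC S π) : ∅ ∉ π :=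
  fun h => not_nonempty_empty (hπ.nonempty ∅ h)

lemma sup_subset (hπ : IsPartialNC S π) : π.sup id ⊆ S := Finset.sup_le hπ.subset

lemma eq_of_mem (hπ : IsPartialNC S π) (hA : A ∈ π) (hB : B ∈ π) (haA : a ∈ A) (haB : a ∈ B) :
    A = B :=
  not_imp_comm.1 (hπ.disjoint A hA B hB) (not_disjoint_iff.2 ⟨a, haA, haB⟩)

lemma blockAt_eq (hπ : IsPartialNC S π) (hA : A ∈ π) (ha : a ∈ A) : blockAt a π = A := by
  have hfilter : {C ∈ π | a ∈ C} = {A} := by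
    ext C
    simp only [mem_filter, mem_singleton]
    exact ⟨fun ⟨hC, haC⟩ => hπ.eq_of_mem hC hA haC ha, by rintro rfl; exact ⟨hA, ha⟩⟩
  rw [blockAt, hfilter, sup_singleton, id]

lemma disjoint_blockAt_sup_peel (hπ : IsPartialNC S π) :
    Disjoint (blockAt a π) ((peel a π).sup id) := by
  simp only [blockAt, Finset.disjoint_sup_left, Finset.disjoint_sup_right, mem_filter, mem_peel]
  rintro A ⟨hA, haA⟩ B ⟨hB, haB⟩
  exact hπ.disjoint B hB A hA (ne_of_mem_of_not_mem' haB haA)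

lemma card_blockAt_add_card_sup_peel (hπ : IsPartialNC S π) (a : ℕ) :
    #(blockAt a π) + #((peel a π).sup id) = #(π.sup id) := by
  rw [← card_union_of_disjoint hπ.disjoint_blockAt_sup_peel, blockAt_union_sup_peel]

lemma addBlock_blockAt_peel (hπ : IsPartialNC S π) (a : ℕ) :
    addBlock (blockAt a π) (peel a π) = π := by
  by_cases ha : ∃ A ∈ π, a ∈ A
  · obtain ⟨A, hA, haA⟩ := ha
    ext C
    rw [hπ.blockAt_eq hA haA, mem_addBlock, mem_peel]
    constructor
    · rintro ⟨-, rfl | hC⟩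
      exacts [hA, hC.1]
    · refine fun hC => ⟨(hπ.nonempty C hC).ne_empty, ?_⟩
      exact or_iff_not_imp_right.2 fun h =>
        hπ.eq_of_mem hC hA (not_not.1 fun haC => h ⟨hC, haC⟩) haA
  · push Not at ha
    rw [blockAt, peel, filter_false_of_mem ha, filter_true_of_mem ha, sup_empty, bot_eq_empty,
      addBlock, erase_insert hπ.empty_notMem]

protected lemma peel (hπ : IsPartialNC (insert a S) π) (ha : ∀ x ∈ S, a < x) :
    IsPartialNC S (peel a π) where
  nonempty A hA := hπ.nonempty A (peel_subset hA)
  subset A hA := (subset_insert_iff_of_notMem (mem_peel.1 hA).2).1 (hπ.subset A (peel_subset hA))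
  disjoint A hA B hB := hπ.disjoint A (peel_subset hA) B (peel_subset hB)
  not_crossing := not_crossing_mono hπ.not_crossing peel_subset
  covered A hA x hx y hy z hz hxz hzy := by
    obtain ⟨hA, haA⟩ := mem_peel.1 hA
    obtain ⟨C, hC, hzC⟩ := mem_sup.1 (hπ.covered A hA x hx y hy z (mem_insert_of_mem hz) hxz hzy)
    refine mem_sup.2 ⟨C, mem_peel.2 ⟨hC, fun haC => hπ.not_crossing ?_⟩, hzC⟩
    have hax : a < x := ha x (mem_of_mem_insert_of_ne (hπ.subset A hA hx) fun h => haA (h ▸ hx))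
    exact ⟨C, hC, A, hA, fun h => haA (h ▸ haC), a, haC, z, hzC, x, hx, y, hy, hax, hxz, hzy⟩

lemma isInitialSegment_blockAt (hπ : IsPartialNC (insert a S) π) (ha : ∀ x ∈ S, a < x) :
    IsInitialSegment (insert a S \ (peel a π).sup id) (blockAt a π) where
  subset := by
    rw [subset_sdiff]
    refine ⟨?_, hπ.disjoint_blockAt_sup_peel⟩
    exact (subset_union_left.trans_eq blockAt_union_sup_peel).trans hπ.sup_subset
  mem_of_lt x hx y hy hxy := by
    obtain ⟨A, hA, hyA⟩ := mem_sup.1 hy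
    obtain ⟨hA, haA⟩ := mem_filter.1 hA
    obtain ⟨hxS, hxpeel⟩ := mem_sdiff.1 hx
    rw [hπ.blockAt_eq hA haA]
    rcases mem_insert.1 hxS with rfl | hxS'
    · exact haA
    · have hcov := hπ.covered A hA a haA y hyA x hxS (ha x hxS') hxy
      rw [← blockAt_union_sup_peel (a := a), hπ.blockAt_eq hA haA] at hcov
      exact (mem_union.1 hcov).resolve_right hxpeel

protected lemma addBlock (hπ : IsPartialNC S π) (ha : ∀ x ∈ S, a < x)
    (hB : IsInitialSegment (insert a S \ π.sup id) B) :
    IsPartialNC (insert a S) (addBlock B π) where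
  nonempty A hA := nonempty_iff_ne_empty.2 (mem_addBlock.1 hA).1
  subset A hA := by
    rcases mem_addBlock.1 hA with ⟨-, rfl | hA⟩
    · exact hB.subset.trans sdiff_subset
    · exact (hπ.subset A hA).trans (subset_insert a S)
  disjoint A hA C hC hne := by
    have hBπ : ∀ D ∈ π, Disjoint B D := fun D hD =>
      (disjoint_of_subset_left hB.subset sdiff_disjoint).mono_right (subset_sup hD)
    obtain ⟨-, hA⟩ := mem_addBlock.1 hA
    obtain ⟨-, hC⟩ := mem_addBlock.1 hC
    rcases hA with rfl | hAπ <;> rcases hC with rfl | hCπ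
    exacts [absurd rfl hne, hBπ C hCπ, (hBπ A hAπ).symm, hπ.disjoint A hAπ C hCπ hne]
  not_crossing := by
    have hBgap : ∀ C ∈ π, ∀ x ∈ C, ∀ y ∈ C, ∀ z ∈ B, x < z → ¬ z < y := by
      intro C hC x hx y hy z hz hxz hzy
      obtain ⟨hzS, hzπ⟩ := mem_sdiff.1 (hB.subset hz)
      have haz : z ≠ a := ((ha x (hπ.subset C hC hx)).trans hxz).ne'
      exact hzπ (hπ.covered C hC x hx y hy z (mem_of_mem_insert_of_ne hzS haz) hxz hzy)
    rintro ⟨A, hA, C, hC, hne, p, hp, q, hq, r, hr, t, ht, hpr, hrq, hqt⟩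
    obtain ⟨-, hA⟩ := mem_addBlock.1 hA
    obtain ⟨-, hC⟩ := mem_addBlock.1 hC
    rcases hA with rfl | hAπ <;> rcases hC with rfl | hCπ
    · exact hne rfl
    · exact hBgap C hCπ r hr t ht q hq hrq hqt
    · exact hBgap A hAπ p hp q hq r hr hpr hrq
    · exact hπ.not_crossing ⟨A, hAπ, C, hCπ, hne, p, hp, q, hq, r, hr, t, ht, hpr, hrq, hqt⟩
  covered A hA x hx y hy z hz hxz hzy := by
    rw [sup_addBlock, mem_union, or_iff_not_imp_right]
    intro hzπ
    rcases mem_addBlock.1 hA with ⟨-, rfl | hA⟩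
    · exact hB.mem_of_lt z (mem_sdiff.2 ⟨hz, hzπ⟩) y hy hzy
    · have haz : z ≠ a := ((ha x (hπ.subset A hA hx)).trans hxz).ne'
      exact absurd (hπ.covered A hA x hx y hy z (mem_of_mem_insert_of_ne hz haz) hxz hzy) hzπ

lemma peel_addBlock (hπ : IsPartialNC S π) (ha : ∀ x ∈ S, a < x)
    (hB : IsInitialSegment (insert a S \ π.sup id) B) :
    peel a (addBlock B π) = π := by
  have haS : a ∉ S := fun h => (ha a h).false
  ext A
  rw [mem_peel, mem_addBlock]
  constructor
  · rintro ⟨⟨hA, rfl | hA'⟩, haA⟩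
    · obtain ⟨b, hb⟩ := nonempty_iff_ne_empty.2 hA
      have hbS := (mem_sdiff.1 (hB.subset hb)).1
      have hab : a < b := ha b (mem_of_mem_insert_of_ne hbS fun h => haA (h ▸ hb))
      have haU : a ∈ insert a S \ π.sup id :=
        mem_sdiff.2 ⟨mem_insert_self a S, fun h => haS (hπ.sup_subset h)⟩
      exact absurd (hB.mem_of_lt a haU b hb hab) haA
    · exact hA'
  · exact fun hA => ⟨⟨(hπ.nonempty A hA).ne_empty, Or.inr hA⟩, fun h => haS (hπ.subset A hA h)⟩

lemma eq_of_peel_eq {π' : Finset (Finset ℕ)} (hπ : IsPartialNC (insert a S) π)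
    (hπ' : IsPartialNC (insert a S) π') (ha : ∀ x ∈ S, a < x) (hpeel : peel a π = peel a π')
    (hcard : #(blockAt a π) = #(blockAt a π')) : π = π' := by
  have hinit := hπ.isInitialSegment_blockAt ha
  rw [hpeel] at hinit
  have hblock := hinit.eq_of_card_eq (hπ'.isInitialSegment_blockAt ha) hcard
  rw [← hπ.addBlock_blockAt_peel a, ← hπ'.addBlock_blockAt_peel a, hpeel, hblock]

lemma exists_peel_eq (hπ : IsPartialNC S π) (ha : ∀ x ∈ S, a < x) {k : ℕ}
    (hk : k + #(π.sup id) ≤ #S + 1) :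
    ∃ π', IsPartialNC (insert a S) π' ∧ peel a π' = π ∧ #(blockAt a π') = k := by
  have hcard : #(insert a S) = #S + 1 := card_insert_of_notMem fun h => (ha a h).false
  have hsup : π.sup id ⊆ insert a S := hπ.sup_subset.trans (subset_insert a S)
  obtain ⟨B, hB, rfl⟩ := exists_isInitialSegment_card_eq (insert a S \ π.sup id) (k := k)
    (by rw [card_sdiff_of_subset hsup]; omega)
  have hdisj : Disjoint B (π.sup id) := disjoint_of_subset_left hB.subset sdiff_disjoint
  have hpeel := hπ.peel_addBlock ha hB
  have hblock := (hπ.addBlock ha hB).card_blockAt_add_card_sup_peel a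
  rw [hpeel, sup_addBlock, card_union_of_disjoint hdisj, Nat.add_right_cancel_iff] at hblock
  exact ⟨addBlock B π, hπ.addBlock ha hB, hpeel, hblock⟩

end IsPartialNC

lemma prod_addBlock {R : Type*} [CommMonoid R] {w : ℕ → R} (hw : w 0 = 1)
    (hπ : ∅ ∉ π) (hB : Disjoint B (π.sup id)) :
    ∏ A ∈ addBlock B π, w #A = w #B * ∏ A ∈ π, w #A := by
  have hBπ : B ∉ π := fun h => hπ (by rwa [disjoint_self.1 (hB.mono_right (subset_sup h))] at h)
  rw [addBlock, prod_erase _ (by rwa [card_empty]), prod_insert hBπ]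

end Peel

section WeightedCount

variable {R : Type*}

open Classical in
/-- The partial noncrossing partitions of `S` that cover exactly `t` elements. -/
noncomputable def partialNC (S : Finset ℕ) (t : ℕ) : Finset (Finset (Finset ℕ)) :=
  {π ∈ S.powerset.powerset | IsPartialNC S π ∧ #(π.sup id) = t}

/-- The number of partial noncrossing partitions of `S` covering `t` elements, each counted with
the product over its blocks `A` of the weights `w #A`. -/
noncomputable def weightedCount [CommSemiring R] (w : ℕ → R) (S : Finset ℕ) (t : ℕ) : R :=
  ∑ π ∈ partialNC S t, ∏ A ∈ π, w #A

variable {S : Finset ℕ} {t a : ℕ} {π : Finset (Finset ℕ)}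

lemma mem_partialNC : π ∈ partialNC S t ↔ IsPartialNC S π ∧ #(π.sup id) = t := by
  simp only [partialNC, mem_filter, and_iff_right_iff_imp, mem_powerset]
  exact fun h A hA => mem_powerset.2 (h.1.subset A hA)

lemma weightedCount_empty_zero [CommSemiring R] (w : ℕ → R) : weightedCount w ∅ 0 = 1 := by
  have h : partialNC ∅ 0 = {∅} := by
    ext π
    rw [mem_partialNC, mem_singleton]
    constructor
    · rintro ⟨hπ, -⟩
      exact eq_empty_of_forall_notMem fun A hA =>
        (hπ.nonempty A hA).ne_empty (subset_empty.1 (hπ.subset A hA))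
    · rintro rfl
      exact ⟨⟨by simp, by simp, by simp, by simp [Crossing], by simp⟩, by simp⟩
  rw [weightedCount, h, sum_singleton, prod_empty]

lemma weightedCount_eq_zero_of_card_lt [CommSemiring R] (w : ℕ → R) (h : #S < t) :
    weightedCount w S t = 0 := by
  refine sum_eq_zero fun π hmem => absurd h (not_lt.2 ?_)
  obtain ⟨hπ, rfl⟩ := mem_partialNC.1 hmem
  exact card_le_card hπ.sup_subset

lemma sum_prod_fiber_peel [CommSemiring R] {w : ℕ → R} (hw : w 0 = 1)
    (ha : ∀ x ∈ S, a < x) {s r : ℕ} (hsr : s + r ≤ #S + 1) :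
    ∑ π ∈ partialNC (insert a S) (s + r) with (#(blockAt a π), #((peel a π).sup id)) = (s, r),
      ∏ A ∈ π, w #A = w s * weightedCount w S r := by
  rw [weightedCount, mul_sum]
  refine sum_nbij (peel a) ?maps ?inj ?surj ?weight <;>
    simp only [Set.InjOn, Set.SurjOn, Set.subset_def, Set.mem_image, coe_filter, Set.mem_ofPred_eq,
      mem_coe, mem_filter, mem_partialNC, Prod.mk.injEq]
  case maps => exact fun π ⟨⟨hπ, _⟩, _, hr⟩ => ⟨hπ.peel ha, hr⟩
  case inj =>
    rintro π ⟨⟨hπ, -⟩, hs, -⟩ π' ⟨⟨hπ', -⟩, hs', -⟩ hpeel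
    exact hπ.eq_of_peel_eq hπ' ha hpeel (hs.trans hs'.symm)
  case surj =>
    rintro _ ⟨hπ, rfl⟩
    obtain ⟨π, hext, rfl, rfl⟩ := hπ.exists_peel_eq ha hsr
    exact ⟨π, ⟨⟨hext, (hext.card_blockAt_add_card_sup_peel a).symm⟩, rfl, rfl⟩, rfl⟩
  case weight =>
    rintro π ⟨⟨hπ, -⟩, rfl, -⟩
    rw [← prod_addBlock hw (hπ.peel ha).empty_notMem hπ.disjoint_blockAt_sup_peel,
      hπ.addBlock_blockAt_peel]

lemma weightedCount_insert [CommSemiring R] {w : ℕ → R} (hw : w 0 = 1)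
    (ha : ∀ x ∈ S, a < x) (ht : t ≤ #S + 1) :
    weightedCount w (insert a S) t = ∑ p ∈ antidiagonal t, w p.1 * weightedCount w S p.2 := by
  rw [weightedCount, ← sum_fiberwise_of_maps_to (t := antidiagonal t)
    (g := fun π => (#(blockAt a π), #((peel a π).sup id)))]
  · refine sum_congr rfl fun ⟨s, r⟩ hp => ?_
    obtain rfl := HasAntidiagonal.mem_antidiagonal.1 hp
    exact sum_prod_fiber_peel hw ha ht
  · intro π hmem
    obtain ⟨hπ, rfl⟩ := mem_partialNC.1 hmem
    exact HasAntidiagonal.mem_antidiagonal.2 (hπ.card_blockAt_add_card_sup_peel a)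

end WeightedCount

section Kreweras

open PowerSeries

variable {R : Type*} [CommRing R]

lemma coeff_X_mul_derivative (f : R⟦X⟧) (n : ℕ) :
    coeff n (X * derivative R f) = n * coeff n f := by
  cases n with
  | zero => simp
  | succ n => rw [coeff_succ_X_mul, coeff_derivative, mul_comm, Nat.cast_succ]

lemma succ_mul_coeff_sub_X_mul_derivative_mul_pow (f : R⟦X⟧) (n t : ℕ) :
    (n + 1 : R) * coeff t ((f - X * derivative R f) * f ^ n) =
      (n + 1 - t) * coeff t (f ^ (n + 1)) := by
  have hderiv : X * derivative R (f ^ (n + 1)) = (n + 1) • (X * derivative R f * f ^ n) := by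
    rw [Derivation.leibniz_pow, Nat.add_sub_cancel, smul_eq_mul, nsmul_eq_mul, nsmul_eq_mul]
    ring
  have hcoeff := congrArg (coeff t) hderiv
  rw [coeff_X_mul_derivative, map_nsmul, nsmul_eq_mul, Nat.cast_succ] at hcoeff
  rw [sub_mul, map_sub, ← pow_succ']
  linear_combination hcoeff

lemma coeff_succ_sub_X_mul_derivative_mul_pow [IsAddTorsionFree R] (f : R⟦X⟧) (n : ℕ) :
    coeff (n + 1) ((f - X * derivative R f) * f ^ n) = 0 := by
  have hmul := succ_mul_coeff_sub_X_mul_derivative_mul_pow f n (n + 1)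
  rwa [Nat.cast_succ, sub_self, zero_mul, ← Nat.cast_succ, ← nsmul_eq_mul,
    nsmul_eq_zero_iff_right n.succ_ne_zero] at hmul

lemma weightedCount_eq_coeff [IsAddTorsionFree R] {w : ℕ → R} (hw : w 0 = 1) (S : Finset ℕ)
    {t : ℕ} (ht : t ≤ #S + 1) :
    weightedCount w S t = coeff t ((mk w - X * derivative R (mk w)) * mk w ^ #S) := by
  induction S using Finset.induction_on_min generalizing t with
  | empty =>
    rcases ht.eq_or_lt with rfl | ht
    · rw [weightedCount_eq_zero_of_card_lt w (Nat.lt_succ_self _),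
        coeff_succ_sub_X_mul_derivative_mul_pow]
    · obtain rfl := Nat.lt_one_iff.1 ht
      simp [weightedCount_empty_zero, hw]
  | insert a S ha ih =>
    rcases ht.eq_or_lt with rfl | ht
    · rw [weightedCount_eq_zero_of_card_lt w (Nat.lt_succ_self _),
        coeff_succ_sub_X_mul_derivative_mul_pow]
    · rw [card_insert_of_notMem fun h => (ha a h).false] at ht ⊢
      rw [weightedCount_insert hw ha (Nat.lt_succ_iff.1 ht), pow_succ', mul_left_comm, coeff_mul]
      refine sum_congr rfl fun p hp => ?_
      have hp' := HasAntidiagonal.mem_antidiagonal.1 hp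
      rw [coeff_mk, ih (by omega)]

theorem card_add_one_mul_weightedCount [IsAddTorsionFree R] {w : ℕ → R} (hw : w 0 = 1)
    (S : Finset ℕ) :
    (#S + 1 : R) * weightedCount w S #S = coeff #S (mk w ^ (#S + 1)) := by
  rw [weightedCount_eq_coeff hw S (Nat.le_succ _), succ_mul_coeff_sub_X_mul_derivative_mul_pow,
    add_sub_cancel_left, one_mul]

end Kreweras

section BlockWeight

open PowerSeries

lemma coeff_coeff_C_X_mul_map_add_map_pow {S : Type*} [CommRing S] (f g : S⟦X⟧) (N n k : ℕ) :
    (coeff n ((C (Polynomial.X : Polynomial S) * map Polynomial.C f +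
      map Polynomial.C g) ^ N)).coeff k = N.choose k * coeff n (f ^ k * g ^ (N - k)) := by
  have hterm (i : ℕ) : (C (Polynomial.X : Polynomial S) * map Polynomial.C f) ^ i *
      map Polynomial.C g ^ (N - i) * (N.choose i : (Polynomial S)⟦X⟧) =
      C (Polynomial.X ^ i) * map Polynomial.C (C (N.choose i : S) * (f ^ i * g ^ (N - i))) := by
    simp only [map_mul, map_pow, map_natCast]
    ring
  simp only [add_pow, hterm, map_sum, coeff_C_mul, coeff_map, Polynomial.finsetSum_coeff,
    Polynomial.coeff_mul_C, Polynomial.coeff_X_pow, ite_mul, one_mul, zero_mul, sum_ite_eq,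
    mem_range]
  split_ifs with h
  · rfl
  · rw [Nat.choose_eq_zero_of_lt (by omega), Nat.cast_zero, zero_mul]

/-- Block weights recording the two statistics of the theorem: a singleton has the outer variable
as its weight, and a larger block the inner one. -/
noncomputable def blockWeight (s : ℕ) : Polynomial (Polynomial ℤ) :=
  if s = 0 then 1 else if s = 1 then Polynomial.X else Polynomial.C Polynomial.X

lemma mk_blockWeight : mk blockWeight =
    C (Polynomial.X : Polynomial (Polynomial ℤ)) * map Polynomial.C X +
      map Polynomial.C (C (Polynomial.X : Polynomial ℤ) * map Polynomial.C (X ^ 2 * mk 1) +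
        map Polynomial.C 1) := by
  ext1 n
  rw [coeff_mk, map_add, coeff_C_mul, coeff_map, coeff_map, map_add, coeff_C_mul, coeff_map,
    coeff_map, coeff_X_pow_mul', coeff_X, coeff_one]
  rcases n with _ | _ | n <;> simp [blockWeight]

lemma coeff_coeff_coeff_mk_blockWeight_pow (N n k j : ℕ) :
    ((coeff n (mk blockWeight ^ N)).coeff k).coeff j =
      N.choose k * ((N - k).choose j * coeff n (X ^ k * (X ^ 2 * mk 1 : ℤ⟦X⟧) ^ j)) := by
  rw [mk_blockWeight, coeff_coeff_C_X_mul_map_add_map_pow, ← map_natCast Polynomial.C,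
    Polynomial.coeff_C_mul]
  simp only [coeff_X_pow_mul']
  split_ifs
  · rw [coeff_coeff_C_X_mul_map_add_map_pow, one_pow, mul_one]
  · simp

lemma prod_blockWeight {π : Finset (Finset ℕ)} (hπ : ∀ A ∈ π, A.Nonempty) :
    ∏ A ∈ π, blockWeight #A =
      Polynomial.C (Polynomial.X ^ #{A ∈ π | #A ≠ 1}) * Polynomial.X ^ #{A ∈ π | #A = 1} := by
  have h : ∀ A ∈ π, blockWeight #A = if #A = 1 then Polynomial.X else Polynomial.C Polynomial.X :=
    fun A hA => if_neg (hπ A hA).card_ne_zero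
  rw [prod_congr rfl h, prod_ite, prod_const, prod_const, map_pow, mul_comm]

lemma coeff_X_pow_mul_X_sq_mul_mk_one_pow {n k j : ℕ} (h : (n, j) ≠ (k, 0)) :
    coeff n (X ^ k * (X ^ 2 * mk 1 : ℤ⟦X⟧) ^ j) = zchoose (n - (k + j) - 1) (j - 1) := by
  cases j with
  | zero =>
    have hnk : n ≠ k := fun hnk => h (by rw [hnk])
    simp [zchoose, coeff_X_pow, hnk]
  | succ j =>
    rw [mul_pow, ← pow_mul, ← mul_assoc, ← pow_add, mk_one_pow_eq_mk_choose_add,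
      coeff_X_pow_mul', coeff_mk, zchoose]
    split_ifs with h₁ h₂ h₂
    · congr 2 <;> omega
    · omega
    · rw [Nat.choose_eq_zero_of_lt (by omega), Nat.cast_zero]
    · rfl

end BlockWeight

lemma isNCPartition_iff_mem_partialNC {n : ℕ} {π : Finset (Finset ℕ)} :
    IsNCPartition n π ↔ π ∈ partialNC (Icc 1 n) n := by
  rw [mem_partialNC]
  constructor
  · rintro ⟨⟨hne, hdisj, hcover⟩, hnc⟩
    have hsup : π.sup id = Icc 1 n := by ext x; rw [hcover x, mem_sup]; rfl
    refine ⟨⟨hne, fun A hA => hsup ▸ subset_sup hA, hdisj, hnc, ?_⟩, by simp [hsup]⟩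
    exact fun _ _ _ _ _ _ z hz _ _ => hsup ▸ hz
  · rintro ⟨hπ, hcard⟩
    have hsup : π.sup id = Icc 1 n := eq_of_subset_of_card_le hπ.sup_subset (by simp [hcard])
    exact ⟨⟨hπ.nonempty, hπ.disjoint, fun x => by rw [← hsup, mem_sup]; rfl⟩, hπ.not_crossing⟩

lemma coeff_coeff_weightedCount_blockWeight (n k j : ℕ) :
    ((weightedCount blockWeight (Icc 1 n) n).coeff k).coeff j = NCcount n (k + j) k := by
  classical
  have hset : {π | IsNCPartition n π ∧ #π = k + j ∧ #{A ∈ π | #A = 1} = k} =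
      (({π ∈ partialNC (Icc 1 n) n | k = #{A ∈ π | #A = 1} ∧ j = #{A ∈ π | #A ≠ 1}} :
        Finset (Finset (Finset ℕ))) : Set (Finset (Finset ℕ))) := by
    ext π
    rw [Set.mem_ofPred_eq, mem_coe, mem_filter, isNCPartition_iff_mem_partialNC,
      ← card_filter_add_card_filter_not (s := π) (fun A => #A = 1)]
    refine and_congr_right fun _ => ?_
    simp only [ne_eq]
    omega
  rw [NCcount, hset, Set.ncard_coe_finset, weightedCount, Polynomial.finsetSum_coeff,
    Polynomial.finsetSum_coeff, card_filter, Nat.cast_sum]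
  refine sum_congr rfl fun π hπ => ?_
  rw [prod_blockWeight (mem_partialNC.1 hπ).1.nonempty, Polynomial.coeff_C_mul_X_pow,
    apply_ite (Polynomial.coeff · j), Polynomial.coeff_X_pow, Polynomial.coeff_zero, ← ite_and,
    Nat.cast_ite, Nat.cast_one, Nat.cast_zero]

lemma NCcount_eq_zero_of_lt (n : ℕ) {m k : ℕ} (h : m < k) : NCcount n m k = 0 := by
  rw [NCcount]
  convert Set.ncard_empty (Finset (Finset ℕ))
  rw [Set.eq_empty_iff_forall_notMem]
  rintro π ⟨-, rfl, rfl⟩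
  exact h.not_ge (card_filter_le π _)

lemma succ_mul_NCcount_add (n k j : ℕ) :
    (n + 1 : ℤ) * NCcount n (k + j) k =
      ((PowerSeries.coeff n (PowerSeries.mk blockWeight ^ (n + 1))).coeff k).coeff j := by
  have hkreweras := card_add_one_mul_weightedCount (w := blockWeight) rfl (Icc 1 n)
  rw [Nat.card_Icc, Nat.add_sub_cancel] at hkreweras
  rw [← hkreweras, ← Nat.cast_succ n, ← Nat.cast_succ n, ← nsmul_eq_mul, ← nsmul_eq_mul,
    Polynomial.coeff_smul, Polynomial.coeff_smul, coeff_coeff_weightedCount_blockWeight]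

lemma choose_mul_choose_sub_eq_choose_mul_zchoose (N k j : ℕ) :
    (N.choose k * (N - k).choose j : ℤ) = N.choose k * zchoose (N - k) j := by
  rcases le_or_gt k N with hk | hk
  · simp [zchoose, ← Nat.cast_sub hk]
  · simp [Nat.choose_eq_zero_of_lt hk]

end NoncrossingPartition

open NoncrossingPartition in
theorem stmt12_general (n m k : ℕ) (h : (n, m) ≠ (k, k)) :
    (n + 1 : ℤ) * NCcount n m k =
      (n + 1).choose k * zchoose (n + 1 - k) (m - k) * zchoose (n - m - 1) (m - k - 1) := by
  rcases lt_or_ge m k with hmk | hkm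
  · rw [NCcount_eq_zero_of_lt n hmk]
    simp [zchoose, hmk.not_ge]
  obtain ⟨j, rfl⟩ := Nat.exists_eq_add_of_le hkm
  have hnj : (n, j) ≠ (k, 0) := by simpa using h
  rw [succ_mul_NCcount_add, coeff_coeff_coeff_mk_blockWeight_pow,
    coeff_X_pow_mul_X_sq_mul_mk_one_pow hnj, ← mul_assoc,
    choose_mul_choose_sub_eq_choose_mul_zchoose]
  push_cast
  rw [add_sub_cancel_left]

theorem stmt12 (n m : ℕ) (h : (n, m) ≠ (1, 1)) :
    (NCcount n m 1 : ℤ) = zchoose n ((m : ℤ) - 1) * zchoose ((n : ℤ) - m - 1) ((m : ℤ) - 2) := by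
  refine mul_left_cancel₀ (by positivity : (n + 1 : ℤ) ≠ 0) ((stmt12_general n m 1 h).trans ?_)
  simp [mul_assoc, sub_sub, one_add_one_eq_two]
end
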